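/- Let 𝔽_q be a finite field, l, m positive integers, and suppose (x^l − 1)(y^m − 1) = g(x,y)·h(x,y) in 𝔽_q[x,y], where g has x-degree a and y-degree b with 0 < a < l and 0 < b < m. Let C be the ideal of 𝔎 = 𝔽_q[x,y]/⟨x^l−1, y^m−1⟩ generated by the image of g, and C* the ideal of 𝔎 generated by the image of the reciprocal polynomial h*. Then C ⊆ C* if and only if (x^l − 1)(y^m − 1) divides g(x,y)·g*(x,y) in 𝔽_q[x,y]. -/

import Mathlib

open MvPolynomial

/-- The reciprocal polynomial of a bivariate polynomial `f` of `x`-degree `l₁` and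
`y`-degree `l₂`: if `f = Σ f_{i,j} x^i y^j` then `f* = Σ f_{i,j} x^{l₁-i} y^{l₂-j}`. -/
noncomputable def recip {F : Type*} [Field F] (f : MvPolynomial (Fin 2) F) :
    MvPolynomial (Fin 2) F :=
  ∑ d ∈ f.support,
    MvPolynomial.monomial
      (Finsupp.single (0 : Fin 2) (f.degreeOf 0 - d 0) +
        Finsupp.single (1 : Fin 2) (f.degreeOf 1 - d 1))
      (MvPolynomial.coeff d f)

/-!
Taking reciprocals is multiplicative and sends `x^n − 1` to its negative, so `g* h* = g h = P` with
`P = (x^l − 1)(y^m − 1)`. Cancelling `g*`, the condition `P ∣ g g*` becomes `h* ∣ g`, while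
`C ⊆ C*` says that `g` lies in `⟨h*, x^l − 1, y^m − 1⟩`. It remains to deduce divisibility from
membership. By unique factorization the divisor `h*` of `P` is `r(x) s(y)` with `r ∣ x^l − 1` and
`s ∣ y^m − 1`. Then `g` lies in `⟨r, y^m − 1⟩` and has `y`-degree less than `m`; reducing modulo
the monic polynomial `y^m − 1`, which commutes with multiplication by `r(x)`, gives `r ∣ g`.
Likewise `s ∣ g`, and `r`, `s` are relatively prime.
-/

section AsPolynomialIn

variable {σ R : Type*} [DecidableEq σ] [CommSemiring R] {i j : σ}

/-- A multivariate polynomial viewed as a univariate polynomial in the variable `X i`, whose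
coefficients are polynomials in the other variables. -/
noncomputable def asPolynomialIn (i : σ) :
    MvPolynomial σ R ≃ₐ[R] Polynomial (MvPolynomial {j // j ≠ i} R) :=
  (renameEquiv R (Equiv.optionSubtypeNe i).symm).trans (optionEquivLeft R {j // j ≠ i})

theorem natDegree_asPolynomialIn (i : σ) (p : MvPolynomial σ R) :
    (asPolynomialIn i p).natDegree = p.degreeOf i :=
  (degreeOf_eq_natDegree i p).symm

theorem exists_asPolynomialIn_eq_C {p : MvPolynomial σ R} (hp : p.degreeOf i = 0) :
    ∃ p₀, asPolynomialIn i p = Polynomial.C p₀ :=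
  ⟨_, Polynomial.eq_C_of_natDegree_eq_zero ((natDegree_asPolynomialIn i p).trans hp)⟩

theorem asPolynomialIn_toMvPolynomial_self (i : σ) (f : Polynomial R) :
    asPolynomialIn i (f.toMvPolynomial i) = f.map C := by
  induction f using Polynomial.induction_on' with
  | add f g hf hg => rw [map_add, map_add, hf, hg, Polynomial.map_add]
  | monomial n a => simp [asPolynomialIn, ← Polynomial.C_mul_X_pow_eq_monomial]

theorem asPolynomialIn_toMvPolynomial_of_ne (hij : i ≠ j) (f : Polynomial R) :
    asPolynomialIn j (f.toMvPolynomial i) = Polynomial.C (f.toMvPolynomial ⟨i, hij⟩) := by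
  induction f using Polynomial.induction_on' with
  | add f g hf hg => simp only [map_add, hf, hg]
  | monomial n a => simp [asPolynomialIn, ← Polynomial.C_mul_X_pow_eq_monomial, hij]

end AsPolynomialIn

section Degree

variable {σ R : Type*} {i j : σ}

theorem degreeOf_toMvPolynomial_self [CommSemiring R] (i : σ) (f : Polynomial R) :
    (f.toMvPolynomial i).degreeOf i = f.natDegree := by
  classical
  rw [← natDegree_asPolynomialIn, asPolynomialIn_toMvPolynomial_self,
    Polynomial.natDegree_map_eq_of_injective (C_injective _ _)]

theorem degreeOf_toMvPolynomial_of_ne [CommSemiring R] (hij : i ≠ j) (f : Polynomial R) :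
    (f.toMvPolynomial i).degreeOf j = 0 := by
  classical
  rw [← natDegree_asPolynomialIn, asPolynomialIn_toMvPolynomial_of_ne hij,
    Polynomial.natDegree_C]

theorem degreeOf_le_of_dvd [CommSemiring R] [NoZeroDivisors R] {p q : MvPolynomial σ R}
    (hpq : p ∣ q) (hq : q ≠ 0) : p.degreeOf i ≤ q.degreeOf i := by
  obtain ⟨k, rfl⟩ := hpq
  rw [degreeOf_mul_eq (left_ne_zero_of_mul hq) (right_ne_zero_of_mul hq)]
  exact Nat.le_add_right _ _

end Degree

section Divisibility

theorem span_mul_sup_span_pair_le {A : Type*} [CommSemiring A] {r a : A} (hra : r ∣ a) (s b : A) :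
    Ideal.span {r * s} ⊔ Ideal.span {a, b} ≤ Ideal.span {r, b} := by
  have hr : r ∈ Ideal.span {r, b} := Ideal.subset_span (Set.mem_insert _ _)
  have hb : b ∈ Ideal.span {r, b} := Ideal.subset_span (Set.mem_insert_of_mem _ rfl)
  rw [sup_le_iff, Ideal.span_singleton_le_iff_mem, Ideal.span_le, Set.pair_subset_iff]
  exact ⟨Ideal.mul_mem_right s _ hr, Ideal.mem_of_dvd _ hra hr, hb⟩

theorem C_dvd_of_mem_span_pair {A : Type*} [CommRing A] {r : A} {f g : Polynomial A}
    (hf : f.Monic) (hgf : g.degree < f.degree) (hg : g ∈ Ideal.span {Polynomial.C r, f}) :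
    Polynomial.C r ∣ g := by
  nontriviality A
  obtain ⟨k, b, hkb⟩ := Ideal.mem_span_pair.1 hg
  have hmod : g = Polynomial.C r * (k %ₘ f) := calc
    g = g %ₘ f := ((Polynomial.modByMonic_eq_self_iff hf).2 hgf).symm
    _ = (r • k) %ₘ f + (b * f) %ₘ f := by
      rw [← hkb, Polynomial.add_modByMonic, mul_comm k, Polynomial.smul_eq_C_mul]
    _ = Polynomial.C r * (k %ₘ f) := by
      rw [(Polynomial.modByMonic_eq_zero_iff_dvd hf).2 (dvd_mul_left f b), add_zero,
        Polynomial.smul_modByMonic, Polynomial.smul_eq_C_mul]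
  exact ⟨_, hmod⟩

variable {σ R : Type*} [CommRing R] {i j : σ}

theorem dvd_of_mem_span_pair_toMvPolynomial {f : Polynomial R} (hf : f.Monic)
    {r g : MvPolynomial σ R} (hr : r.degreeOf i = 0) (hgf : g.degreeOf i < f.natDegree)
    (hg : g ∈ Ideal.span {r, f.toMvPolynomial i}) : r ∣ g := by
  classical
  obtain ⟨r₀, hr₀⟩ := exists_asPolynomialIn_eq_C hr
  rw [← map_dvd_iff (asPolynomialIn i), hr₀]
  refine C_dvd_of_mem_span_pair (hf.map C) (Polynomial.degree_lt_degree ?_) ?_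
  · rwa [natDegree_asPolynomialIn,
      Polynomial.natDegree_map_eq_of_injective (C_injective _ _)]
  · simpa only [Ideal.map_span, Set.image_pair, hr₀, asPolynomialIn_toMvPolynomial_self] using
      Ideal.mem_map_of_mem (asPolynomialIn i) hg

theorem isRelPrime_toMvPolynomial_of_degreeOf_eq_zero [NoZeroDivisors R] {f : Polynomial R}
    (hf : f.Monic) {r : MvPolynomial σ R} (hr : r ≠ 0) (hri : r.degreeOf i = 0) :
    IsRelPrime r (f.toMvPolynomial i) := by
  classical
  intro d hdr hdf
  obtain ⟨d₀, hd₀⟩ :=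
    exists_asPolynomialIn_eq_C (Nat.le_zero.1 (hri ▸ degreeOf_le_of_dvd hdr hr))
  have hdvd : Polynomial.C d₀ ∣ f.map C := by
    rw [← hd₀, ← asPolynomialIn_toMvPolynomial_self i]
    exact map_dvd _ hdf
  rw [← MulEquiv.isUnit_map (asPolynomialIn i), hd₀]
  exact ((hf.map C).isPrimitive d₀ hdvd).map Polynomial.C

theorem dvd_of_mem_span_sup_span_toMvPolynomial [IsDomain R] [UniqueFactorizationMonoid R]
    (hij : i ≠ j) {u v : Polynomial R} (hu : u.Monic) (hv : v.Monic)
    {p g : MvPolynomial σ R} (hp : p ∣ u.toMvPolynomial i * v.toMvPolynomial j)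
    (hgu : g.degreeOf i < u.natDegree) (hgv : g.degreeOf j < v.natDegree)
    (hg : g ∈ Ideal.span {p} ⊔ Ideal.span {u.toMvPolynomial i, v.toMvPolynomial j}) :
    p ∣ g := by
  obtain ⟨r, s, hru, hsv, rfl⟩ := exists_dvd_and_dvd_of_dvd_mul hp
  have hu₀ : u.toMvPolynomial i ≠ 0 :=
    (map_ne_zero_iff _ (Polynomial.toMvPolynomial_injective i)).2 hu.ne_zero
  have hv₀ : v.toMvPolynomial j ≠ 0 :=
    (map_ne_zero_iff _ (Polynomial.toMvPolynomial_injective j)).2 hv.ne_zero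
  have hrj : r.degreeOf j = 0 :=
    Nat.le_zero.1 (degreeOf_toMvPolynomial_of_ne hij u ▸ degreeOf_le_of_dvd hru hu₀)
  have hsi : s.degreeOf i = 0 :=
    Nat.le_zero.1 (degreeOf_toMvPolynomial_of_ne hij.symm v ▸ degreeOf_le_of_dvd hsv hv₀)
  have hrv : IsRelPrime r (v.toMvPolynomial j) :=
    isRelPrime_toMvPolynomial_of_degreeOf_eq_zero hv (ne_zero_of_dvd_ne_zero hu₀ hru) hrj
  have hrg : r ∣ g :=
    dvd_of_mem_span_pair_toMvPolynomial hv hrj hgv (span_mul_sup_span_pair_le hru s _ hg)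
  have hsg : s ∣ g := by
    rw [mul_comm, Set.pair_comm] at hg
    exact dvd_of_mem_span_pair_toMvPolynomial hu hsi hgu (span_mul_sup_span_pair_le hsv r _ hg)
  exact (hrv.of_dvd_right hsv).mul_dvd hrg hsg

end Divisibility

section XPowSubOne

variable {σ R : Type*} [CommRing R]

theorem toMvPolynomial_X_pow_sub_one (i : σ) (n : ℕ) :
    (Polynomial.X ^ n - 1 : Polynomial R).toMvPolynomial i = X i ^ n - 1 := by
  rw [map_sub, map_pow, Polynomial.toMvPolynomial_X, map_one]

theorem degreeOf_X_pow_sub_one_self [Nontrivial R] (i : σ) (n : ℕ) :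
    (X i ^ n - 1 : MvPolynomial σ R).degreeOf i = n := by
  rw [← toMvPolynomial_X_pow_sub_one, degreeOf_toMvPolynomial_self, ← Polynomial.C_1,
    Polynomial.natDegree_X_pow_sub_C]

theorem degreeOf_X_pow_sub_one_of_ne {i j : σ} (hij : i ≠ j) (n : ℕ) :
    (X i ^ n - 1 : MvPolynomial σ R).degreeOf j = 0 := by
  rw [← toMvPolynomial_X_pow_sub_one, degreeOf_toMvPolynomial_of_ne hij]

theorem X_pow_sub_one_ne_zero [Nontrivial R] (i : σ) {n : ℕ} (hn : n ≠ 0) :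
    (X i ^ n - 1 : MvPolynomial σ R) ≠ 0 :=
  ne_zero_of_degreeOf_ne_zero (i := i) (by rwa [degreeOf_X_pow_sub_one_self])

theorem dvd_of_mem_span_sup_span_X_pow_sub_one [IsDomain R] [UniqueFactorizationMonoid R] {i j : σ}
    (hij : i ≠ j) {l m : ℕ} {p g : MvPolynomial σ R} (hp : p ∣ (X i ^ l - 1) * (X j ^ m - 1))
    (hgl : g.degreeOf i < l) (hgm : g.degreeOf j < m)
    (hg : g ∈ Ideal.span {p} ⊔ Ideal.span {X i ^ l - 1, X j ^ m - 1}) : p ∣ g := by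
  have hmonic {n : ℕ} (hn : n ≠ 0) : (Polynomial.X ^ n - 1 : Polynomial R).Monic :=
    Polynomial.monic_X_pow_sub_C 1 hn
  have hdegree (n : ℕ) : (Polynomial.X ^ n - 1 : Polynomial R).natDegree = n :=
    Polynomial.natDegree_X_pow_sub_C (r := 1)
  simp only [← toMvPolynomial_X_pow_sub_one] at hp hg
  exact dvd_of_mem_span_sup_span_toMvPolynomial hij
    (hmonic (Nat.ne_zero_of_lt hgl)) (hmonic (Nat.ne_zero_of_lt hgm)) hp
    (by rwa [hdegree]) (by rwa [hdegree]) hg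

end XPowSubOne

section Recip

variable {F : Type*} [Field F]

theorem aeval_recip {A : Type*} [CommSemiring A] [Algebra F A] {v w : Fin 2 → A}
    (hvw : ∀ i, v i * w i = 1) (f : MvPolynomial (Fin 2) F) :
    aeval v (recip f) = (∏ i, v i ^ f.degreeOf i) * aeval w f := by
  conv_rhs => rw [aeval_def, eval₂_eq']
  rw [recip, map_sum, Finset.mul_sum]
  refine Finset.sum_congr rfl fun d hd => ?_
  have hexp : ∀ i, (Finsupp.single 0 (f.degreeOf 0 - d 0) +
      Finsupp.single 1 (f.degreeOf 1 - d 1) : Fin 2 →₀ ℕ) i = f.degreeOf i - d i := by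
    simp [Fin.forall_fin_two]
  have hpow : ∀ i, v i ^ (f.degreeOf i - d i) = v i ^ f.degreeOf i * w i ^ d i := fun i => by
    conv_rhs => rw [← Nat.sub_add_cancel (monomial_le_degreeOf i hd)]
    rw [pow_add, mul_assoc, ← mul_pow, hvw, one_pow, mul_one]
  rw [aeval_monomial, Finsupp.prod_fintype _ _ fun i => pow_zero (v i)]
  simp only [hexp, hpow, Finset.prod_mul_distrib]
  ring

theorem algebraMap_recip (L : Type*) [Field L] [Algebra F L] [Algebra (MvPolynomial (Fin 2) F) L]
    [IsScalarTower F (MvPolynomial (Fin 2) F) L] [FaithfulSMul (MvPolynomial (Fin 2) F) L]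
    (f : MvPolynomial (Fin 2) F) :
    algebraMap _ L (recip f) = (∏ i, algebraMap (MvPolynomial (Fin 2) F) L (X i) ^ f.degreeOf i) *
      aeval (fun i => (algebraMap (MvPolynomial (Fin 2) F) L (X i))⁻¹) f := by
  have hX : ∀ i, algebraMap (MvPolynomial (Fin 2) F) L (X i) ≠ 0 := fun i =>
    (map_ne_zero_iff _ (FaithfulSMul.algebraMap_injective _ _)).2 (X_ne_zero i)
  rw [← aeval_recip fun i => mul_inv_cancel₀ (hX i), ← Function.comp_def, aeval_algebraMap_apply,
    aeval_X_left_apply]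

theorem recip_mul (f g : MvPolynomial (Fin 2) F) : recip (f * g) = recip f * recip g := by
  rcases eq_or_ne f 0 with rfl | hf
  · simp [recip]
  rcases eq_or_ne g 0 with rfl | hg
  · simp [recip]
  apply FaithfulSMul.algebraMap_injective _ (FractionRing (MvPolynomial (Fin 2) F))
  simp only [map_mul, algebraMap_recip, degreeOf_mul_eq hf hg, pow_add, Finset.prod_mul_distrib]
  ring

theorem recip_X_pow_sub_one (i : Fin 2) (n : ℕ) :
    recip (X i ^ n - 1 : MvPolynomial (Fin 2) F) = 1 - X i ^ n := by
  apply FaithfulSMul.algebraMap_injective _ (FractionRing (MvPolynomial (Fin 2) F))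
  rw [algebraMap_recip, Fintype.prod_eq_single i fun j hj => by
    rw [degreeOf_X_pow_sub_one_of_ne hj.symm, pow_zero], degreeOf_X_pow_sub_one_self]
  simp [mul_sub]

theorem recip_mul_recip_of_mul_eq {l m : ℕ} {g h : MvPolynomial (Fin 2) F}
    (heq : (X 0 ^ l - 1) * (X 1 ^ m - 1) = g * h) :
    recip g * recip h = (X 0 ^ l - 1) * (X 1 ^ m - 1) := by
  rw [← recip_mul, ← heq, recip_mul, recip_X_pow_sub_one, recip_X_pow_sub_one]
  ring

end Recip

theorem stmt_7_general {F : Type*} [Field F] {l m : ℕ} {g h : MvPolynomial (Fin 2) F}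
    (heq : (X 0 ^ l - 1) * (X 1 ^ m - 1) = g * h)
    (hgl : g.degreeOf 0 < l) (hgm : g.degreeOf 1 < m)
    {K : Ideal (MvPolynomial (Fin 2) F)} (hK : K = Ideal.span {X 0 ^ l - 1, X 1 ^ m - 1}) :
    Ideal.span {Ideal.Quotient.mk K g} ≤ Ideal.span {Ideal.Quotient.mk K (recip h)} ↔
      (X (0 : Fin 2) ^ l - 1) * (X 1 ^ m - 1) ∣ g * recip g := by
  have hrecip : recip g * recip h = (X 0 ^ l - 1) * (X 1 ^ m - 1) := recip_mul_recip_of_mul_eq heq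
  have hg : recip g ≠ 0 := by
    refine left_ne_zero_of_mul (b := recip h) ?_
    rw [hrecip]
    exact mul_ne_zero (X_pow_sub_one_ne_zero 0 (Nat.ne_zero_of_lt hgl))
      (X_pow_sub_one_ne_zero 1 (Nat.ne_zero_of_lt hgm))
  rw [Ideal.span_singleton_le_span_singleton, ← hrecip, mul_comm g, mul_dvd_mul_iff_left hg]
  refine ⟨fun hdvd => ?_, map_dvd _⟩
  have hmem : g ∈ Ideal.span {recip h} ⊔ K := by
    rwa [← Ideal.mem_quotient_iff_mem_sup, Ideal.map_span, Set.image_singleton,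
      Ideal.mem_span_singleton]
  exact dvd_of_mem_span_sup_span_X_pow_sub_one zero_ne_one
    (hrecip ▸ dvd_mul_left _ _) hgl hgm (hK ▸ hmem)

/-- Suppose `(x^l − 1)(y^m − 1) = g·h` in `F[x,y]`, where `g` has
`x`-degree `a` and `y`-degree `b` with `0 < a < l` and `0 < b < m`.  Let `C` be the
ideal of `𝔎 = F[x,y]/⟨x^l−1, y^m−1⟩` generated by the image of `g` and `C*` the ideal
generated by the image of `h*`.  Then `C ⊆ C*` iff `(x^l − 1)(y^m − 1)` divides `g·g*`. -/
theorem stmt_7 (F : Type*) [Field F] [Fintype F] (l m : ℕ) (hl : 0 < l) (hm : 0 < m)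
    (g h : MvPolynomial (Fin 2) F)
    (heq : (X 0 ^ l - 1) * (X 1 ^ m - 1) = g * h)
    (ha0 : 0 < g.degreeOf 0) (hal : g.degreeOf 0 < l)
    (hb0 : 0 < g.degreeOf 1) (hbm : g.degreeOf 1 < m)
    (K : Ideal (MvPolynomial (Fin 2) F))
    (hK : K = Ideal.span {X 0 ^ l - 1, X 1 ^ m - 1}) :
    Ideal.span {Ideal.Quotient.mk K g} ≤ Ideal.span {Ideal.Quotient.mk K (recip h)} ↔
      (X (0 : Fin 2) ^ l - 1) * (X 1 ^ m - 1) ∣ g * recip g :=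
  stmt_7_general heq hal hbm hK
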